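/- arXiv:2101.04225 — 5 statements merged into one kernel-verified Lean document; each statement's English description precedes it below -/
import Mathlib

section
/- Let A be an N×N matrix over a commutative ring. For all integers i_1, i_2, j_1, j_2 with 1 ≤ i_1 < i_2 ≤ N and 1 ≤ j_1 < j_2 ≤ N, one has det A · det A_{i_1,i_2}^{j_1,j_2} = det A_{i_1}^{j_1} · det A_{i_2}^{j_2} − det A_{i_1}^{j_2} · det A_{i_2}^{j_1}. -/
open Matrix

theorem two_row_aux {R n : Type*} [CommRing R] [Fintype n] [DecidableEq n]
    (A : Matrix n n R) (i1 i2 j1 j2 : n) (hi : i1 ≠ i2) :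
    A.det * (adjugate (A.updateRow i1 (Pi.single j1 1)) j2 i2) =
      adjugate A j1 i1 * adjugate A j2 i2 - adjugate A j1 i2 * adjugate A j2 i1 := by
  set B := A.updateRow i1 (Pi.single j1 1) with hB
  have hv : A.det • (Pi.single j2 1 : n → R) = ∑ i, adjugate A j2 i • A i := by
    funext k
    have := congrFun (congrFun (adjugate_mul A) j2) k
    rw [Matrix.mul_apply] at this
    simp only [Finset.sum_apply, Pi.smul_apply, smul_eq_mul]
    rw [this]
    simp [Matrix.one_apply, Pi.single_apply, eq_comm]
  have h1 : A.det * adjugate B j2 i2 = cramer Bᵀ (A.det • (Pi.single j2 1 : n → R)) i2 := by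
    rw [map_smul, Pi.smul_apply, cramer_transpose_apply, adjugate_apply, smul_eq_mul]
  rw [h1, hv, map_sum, Finset.sum_apply]
  simp only [cramer_transpose_apply, det_updateRow_smul]
  rw [← Finset.sum_subset (Finset.subset_univ {i1, i2}), Finset.sum_pair hi]
  · have e2 : B.updateRow i2 (A i2) = B := by
      have : A i2 = B i2 := by rw [hB, updateRow_ne hi.symm]
      rw [this, updateRow_eq_self]
    have e1 : (B.updateRow i2 (A i1)).det = - (A.updateRow i2 (Pi.single j1 1)).det := by
      have : B.updateRow i2 (A i1) =
          (A.updateRow i2 (Pi.single j1 1)).submatrix (Equiv.swap i1 i2) id := by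
        ext a b
        rcases eq_or_ne a i2 with rfl | h2
        · simp [updateRow_ne hi]
        · rcases eq_or_ne a i1 with rfl | h3
          · simp [hB, updateRow_ne hi]
          · simp [hB, updateRow_ne h2, updateRow_ne h3, Equiv.swap_apply_of_ne_of_ne h3 h2]
      rw [this, det_permute, Equiv.Perm.sign_swap hi]
      simp
    rw [e1, e2, adjugate_apply A j1 i1, adjugate_apply A j1 i2, ← hB]
    ring
  · intro x _ hx
    simp only [Finset.mem_insert, Finset.mem_singleton, not_or] at hx
    rw [det_zero_of_row_eq (i := x) (j := i2) hx.2, mul_zero]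
    rw [updateRow_self, updateRow_ne hx.2, hB, updateRow_ne hx.1]

theorem stmt2 {R : Type*} [CommRing R] {N : ℕ}
    (A : Matrix (Fin (N + 2)) (Fin (N + 2)) R)
    (i1 i2 j1 j2 : Fin (N + 2)) (hi : i1 < i2) (hj : j1 < j2) :
    A.det *
      (A.submatrix
        (fun k => i2.succAbove ((i1.castPred (Fin.ne_last_of_lt hi)).succAbove k))
        (fun k => j2.succAbove ((j1.castPred (Fin.ne_last_of_lt hj)).succAbove k))).det =
    (A.submatrix i1.succAbove j1.succAbove).det *
        (A.submatrix i2.succAbove j2.succAbove).det -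
      (A.submatrix i1.succAbove j2.succAbove).det *
        (A.submatrix i2.succAbove j1.succAbove).det := by
  have key := two_row_aux A i1 i2 j1 j2 hi.ne
  set p := i1.castPred (Fin.ne_last_of_lt hi) with hp
  set q := j1.castPred (Fin.ne_last_of_lt hj) with hq
  have hp' : i2.succAbove p = i1 := by
    rw [Fin.succAbove_of_castSucc_lt] <;> simp [hp, hi]
  have hq' : j2.succAbove q = j1 := by
    rw [Fin.succAbove_of_castSucc_lt] <;> simp [hq, hj]
  have hs : (A.updateRow i1 (Pi.single j1 1)).submatrix i2.succAbove j2.succAbove =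
      (A.submatrix i2.succAbove j2.succAbove).updateRow p (Pi.single q 1) := by
    ext a b
    rcases eq_or_ne a p with rfl | h
    · rw [submatrix_apply, hp', updateRow_self, updateRow_self, ← hq']
      simp [Pi.single_apply]
    · have : i2.succAbove a ≠ i1 := by
        rw [← hp']; exact fun h' => h (Fin.succAbove_right_injective h')
      simp [updateRow_ne this, updateRow_ne h]
  rw [adjugate_fin_succ_eq_det_submatrix, hs, ← adjugate_apply] at key
  simp only [adjugate_fin_succ_eq_det_submatrix] at key
  rw [submatrix_submatrix] at key
  have hpv : (p : ℕ) = i1 := by simp [hp]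
  have hqv : (q : ℕ) = j1 := by simp [hq]
  rw [hpv, hqv] at key
  simp only [Function.comp_def] at key
  have sq : ∀ k : ℕ, ((-1 : R) ^ k) * (-1) ^ k = 1 := fun k => by
    rw [← mul_pow]; simp
  have a1 := sq i1
  have a2 := sq i2
  have b1 := sq j1
  have b2 := sq j2
  simp only [pow_add] at key
  generalize (-1 : R) ^ (i1 : ℕ) = x1 at *
  generalize (-1 : R) ^ (i2 : ℕ) = x2 at *
  generalize (-1 : R) ^ (j1 : ℕ) = y1 at *
  generalize (-1 : R) ^ (j2 : ℕ) = y2 at *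
  have hu : (x1 * x2 * y1 * y2) * (x1 * x2 * y1 * y2) = 1 := by
    calc _ = (x1 * x1) * (x2 * x2) * (y1 * y1) * (y2 * y2) := by ring
      _ = 1 := by rw [a1, a2, b1, b2]; ring
  have key2 := congrArg (fun z => (x1 * x2 * y1 * y2) * z) key
  linear_combination key2 + (-(A.det *
      (A.submatrix (fun k => i2.succAbove (p.succAbove k))
        (fun k => j2.succAbove (q.succAbove k))).det) +
    ((A.submatrix i1.succAbove j1.succAbove).det *
        (A.submatrix i2.succAbove j2.succAbove).det -
      (A.submatrix i1.succAbove j2.succAbove).det *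
        (A.submatrix i2.succAbove j1.succAbove).det)) * hu
end

section
/- Let (c_m)_{m≥0} be a sequence in a field K of characteristic zero and let α, β ∈ K. Then for every positive integer n: (β − α) · det_{0≤i,j≤n−1}( α·β·c_{i+j} + (α+β)·c_{i+j+1} + c_{i+j+2} ) · det_{0≤i,j≤n}( c_{i+j} ) = det_{0≤i,j≤n−1}( α·c_{i+j} + c_{i+j+1} ) · det_{0≤i,j≤n}( β·c_{i+j} + c_{i+j+1} ) − det_{0≤i,j≤n−1}( β·c_{i+j} + c_{i+j+1} ) · det_{0≤i,j≤n}( α·c_{i+j} + c_{i+j+1} ). -/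
open Matrix

namespace HankelAux

open Polynomial

variable {K : Type*} [Field K]

/-- The moment functional. -/
noncomputable def mom (c : ℕ → K) : K[X] →ₗ[K] K :=
  Polynomial.lsum fun i => (LinearMap.id : K →ₗ[K] K).smulRight (c i)

lemma mom_monomial (c : ℕ → K) (i : ℕ) (a : K) : mom c (C a * X ^ i) = a * c i := by
  rw [Polynomial.C_mul_X_pow_eq_monomial]
  simp [mom, Polynomial.lsum_apply, Polynomial.sum_monomial_index]

lemma mom_X (c : ℕ → K) (i : ℕ) : mom c (X ^ i) = c i := by
  have := mom_monomial c i 1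
  simpa using this

/-- Row of moments attached to a polynomial. -/
noncomputable def row (c : ℕ → K) (N : ℕ) (p : K[X]) : Fin N → K :=
  fun k => mom c (p * X ^ (k : ℕ))

lemma det_monic (c : ℕ → K) (N : ℕ) (q : K[X]) (p : ℕ → K[X])
    (hp : ∀ i, (p i).Monic) (hd : ∀ i, (p i).natDegree = i) :
    det (of fun i : Fin N => row c N (q * p i)) =
      det (of fun i : Fin N => row c N (q * X ^ (i : ℕ))) := by
  have hT := Matrix.det_matrixOfPolynomials (R := K) (fun i : Fin N => p i)
    (fun i => hd i) (fun i => hp i)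
  have : (of fun i : Fin N => row c N (q * p i)) =
      (of fun i j : Fin N => (p j).coeff i)ᵀ *
        (of fun i : Fin N => row c N (q * X ^ (i : ℕ))) := by
    ext i k
    simp only [Matrix.mul_apply, of_apply, transpose_apply, row]
    conv_lhs => rw [(p i).as_sum_range' N (by rw [hd]; exact i.2)]
    rw [← Fin.sum_univ_eq_sum_range (fun j => monomial j ((p i).coeff j)), Finset.mul_sum,
      Finset.sum_mul, map_sum]
    refine Finset.sum_congr rfl fun j _ => ?_
    rw [← smul_eq_mul (a := (p i).coeff j), ← map_smul]
    congr 1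
    rw [← Polynomial.C_mul_X_pow_eq_monomial, Polynomial.smul_eq_C_mul]
    ring
  rw [this, det_mul, det_transpose, hT, one_mul]

lemma det_snoc_cons {n : ℕ} (N : Fin n → Fin (n + 1) → K) (x : Fin (n + 1) → K) :
    det (of (Fin.snoc N x : Fin (n + 1) → Fin (n + 1) → K)) =
      (-1) ^ n * det (of (Fin.cons x N : Fin (n + 1) → Fin (n + 1) → K)) := by
  have h := det_permute (finRotate (n + 1))
    (of (Fin.cons x N : Fin (n + 1) → Fin (n + 1) → K))
  rw [sign_finRotate] at h
  have e : (of (Fin.snoc N x : Fin (n + 1) → Fin (n + 1) → K)) =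
      (of (Fin.cons x N : Fin (n + 1) → Fin (n + 1) → K)).submatrix (finRotate (n + 1)) id := by
    ext i k
    have := congrFun (Fin.snoc_eq_cons_rotate (α := Fin (n + 1) → K) N x) i
    simp only [of_apply, submatrix_apply, id]
    rw [this]
  rw [e, h]
  push_cast
  rfl

lemma det_snoc_single {n : ℕ} (N : Fin n → Fin (n + 1) → K) :
    det (of (Fin.snoc N (Pi.single (Fin.last n) 1) : Fin (n + 1) → Fin (n + 1) → K)) =
      det (of fun i k : Fin n => N i k.castSucc) := by
  rw [det_succ_row _ (Fin.last n)]
  rw [Finset.sum_eq_single (Fin.last n)]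
  · have : (-1 : K) ^ (n + n) = 1 := Even.neg_one_pow ⟨n, rfl⟩
    simp only [Fin.val_last, this, of_apply, Fin.snoc_last, Pi.single_eq_same, one_mul]
    congr 1
    ext i k
    simp [Fin.succAbove_last]
  · intro b _ hb
    simp [Pi.single_eq_of_ne hb]
  · simp

/-- The determinant with first row `x`, last row `y`. -/
noncomputable def br {m : ℕ} (N : Fin m → Fin (m + 2) → K) (x y : Fin (m + 2) → K) : K :=
  det (of (Fin.cons x (Fin.snoc N y : Fin (m + 1) → Fin (m + 2) → K) :
    Fin (m + 2) → Fin (m + 2) → K))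

lemma br_swap {m : ℕ} (N : Fin m → Fin (m + 2) → K) (x y : Fin (m + 2) → K) :
    br N x y = - br N y x := by
  unfold br
  have h := det_permute (Equiv.swap 0 (Fin.last (m + 1)))
    (of (Fin.cons y (Fin.snoc N x : Fin (m + 1) → Fin (m + 2) → K) :
      Fin (m + 2) → Fin (m + 2) → K))
  rw [Equiv.Perm.sign_swap (Fin.last_pos).ne] at h
  have e : (of (Fin.cons x (Fin.snoc N y : Fin (m + 1) → Fin (m + 2) → K) :
      Fin (m + 2) → Fin (m + 2) → K)) = (of (Fin.cons y (Fin.snoc N x : Fin (m + 1) →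
      Fin (m + 2) → K) : Fin (m + 2) → Fin (m + 2) → K)).submatrix
        (Equiv.swap 0 (Fin.last (m + 1))) id := by
    ext i k
    simp only [of_apply, submatrix_apply, id]
    refine Fin.cases ?_ (fun i => ?_) i
    · rw [Equiv.swap_apply_left, ← Fin.succ_last]
      simp
    · refine Fin.lastCases ?_ (fun i => ?_) i
      · rw [Fin.succ_last, Equiv.swap_apply_right, ← Fin.succ_last]
        simp
      · rw [Equiv.swap_apply_of_ne_of_ne (Fin.succ_ne_zero _)]
        · simp
        · rw [← Fin.succ_last]
          exact fun h => (Fin.castSucc_lt_last i).ne (Fin.succ_injective _ h)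
  rw [e, h]
  simp

lemma br_last {m : ℕ} (N : Fin m → Fin (m + 2) → K) (w y : Fin (m + 2) → K) :
    br N w y = det ((of (Fin.cons w (Fin.snoc N 0 : Fin (m + 1) → Fin (m + 2) → K) :
      Fin (m + 2) → Fin (m + 2) → K)).updateRow (Fin.last (m + 1)) y) := by
  unfold br
  congr 1
  ext i k
  refine Fin.cases ?_ (fun i => ?_) i
  · rw [updateRow_ne (Fin.last_pos).ne]
    simp
  · refine Fin.lastCases ?_ (fun i => ?_) i
    · rw [Fin.succ_last, updateRow_self, of_apply, ← Fin.succ_last]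
      simp
    · rw [updateRow_ne]
      · simp
      · rw [← Fin.succ_last]
        exact fun h => (Fin.castSucc_lt_last i).ne (Fin.succ_injective _ h)

/-- `br N w` as a linear map. -/
noncomputable def brl {m : ℕ} (N : Fin m → Fin (m + 2) → K) (w : Fin (m + 2) → K) :
    (Fin (m + 2) → K) →ₗ[K] K where
  toFun := br N w
  map_add' x y := by simp only [br_last, det_updateRow_add]
  map_smul' a x := by simp only [br_last, det_updateRow_smul, smul_eq_mul, RingHom.id_apply]

lemma br_mem {m : ℕ} (N : Fin m → Fin (m + 2) → K) (w : Fin (m + 2) → K) (j : Fin m) :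
    br N w (N j) = 0 := by
  unfold br
  refine det_zero_of_row_eq (i := j.castSucc.succ) (j := Fin.last (m + 1)) ?_ ?_
  · rw [← Fin.succ_last]
    exact fun h => (Fin.castSucc_lt_last j).ne (Fin.succ_injective _ h)
  · rw [← Fin.succ_last]
    ext k
    simp

lemma plucker {m : ℕ} (N : Fin m → Fin (m + 2) → K) (w e u v : Fin (m + 2) → K) :
    br N w e * br N u v = br N e v * br N w u + br N u e * br N w v := by
  set M : Matrix (Fin (m + 2)) (Fin (m + 2)) K :=
    of (Fin.cons u (Fin.snoc N v : Fin (m + 1) → Fin (m + 2) → K)) with hM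
  have h := mulVec_cramer Mᵀ e
  rw [det_transpose, mulVec_transpose, vecMul_eq_sum] at h
  have h2 := congrArg (brl N w) h
  rw [map_sum, map_smul] at h2
  simp only [map_smul, smul_eq_mul, cramer_transpose_apply] at h2
  rw [Fin.sum_univ_succ, Fin.sum_univ_castSucc] at h2
  have hz : ∀ i : Fin m, brl N w (M i.castSucc.succ) = 0 := fun i => by
    have : M i.castSucc.succ = N i := by ext k; simp [hM]
    rw [this]; exact br_mem N w i
  have h0 : M 0 = u := by ext k; simp [hM]
  have hl : M (Fin.last m).succ = v := by ext k; simp [hM]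
  have d0 : (M.updateRow 0 e).det = br N e v := by
    unfold br
    congr 1
    ext i k
    refine Fin.cases ?_ (fun i => ?_) i
    · simp
    · rw [updateRow_ne (Fin.succ_ne_zero _)]
      simp [hM]
  have dl : (M.updateRow (Fin.last m).succ e).det = br N u e := by
    rw [br_last]
    congr 1
    ext i k
    refine Fin.cases ?_ (fun i => ?_) i
    · rw [Fin.succ_last, updateRow_ne (Fin.last_pos).ne, updateRow_ne (Fin.last_pos).ne]
      simp [hM]
    · refine Fin.lastCases ?_ (fun i => ?_) i
      · rw [Fin.succ_last, updateRow_self, updateRow_self]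
      · have : i.castSucc.succ ≠ (Fin.last m).succ :=
          fun h => (Fin.castSucc_lt_last i).ne (Fin.succ_injective _ h)
        rw [← Fin.succ_last, updateRow_ne this, updateRow_ne this]
        simp [hM]
  simp only [hz, h0, hl, d0, dl, mul_zero, Finset.sum_const_zero, zero_add] at h2
  have h3 : M.det = br N u v := rfl
  rw [h3] at h2
  change br N e v * br N w u + br N u e * br N w v = br N u v * br N w e at h2
  rw [h2, mul_comm]

/-- First monic family. -/
noncomputable def P (b : K) : ℕ → K[X]
  | 0 => 1
  | j + 1 => (X + C b) * X ^ j

lemma P_monic (b : K) : ∀ i, (P b i).Monic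
  | 0 => monic_one
  | j + 1 => (monic_X_add_C b).mul (monic_X_pow j)

lemma P_deg (b : K) : ∀ i, (P b i).natDegree = i
  | 0 => natDegree_one
  | j + 1 => by
    rw [P, (monic_X_add_C b).natDegree_mul (monic_X_pow j), natDegree_X_add_C, natDegree_X_pow,
      add_comm]

/-- Second monic family. -/
noncomputable def Q (a b : K) : ℕ → K[X]
  | 0 => 1
  | j + 1 => (X + C a) * P b j

lemma Q_monic (a b : K) : ∀ i, (Q a b i).Monic
  | 0 => monic_one
  | j + 1 => (monic_X_add_C a).mul (P_monic b j)

lemma Q_deg (a b : K) : ∀ i, (Q a b i).natDegree = i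
  | 0 => natDegree_one
  | j + 1 => by
    rw [Q, (monic_X_add_C a).natDegree_mul (P_monic b j), natDegree_X_add_C, P_deg, add_comm]

lemma row_one (c : ℕ → K) (N : ℕ) : (of fun i : Fin N => row c N (1 * X ^ (i : ℕ))) =
    of fun i j : Fin N => c ((i : ℕ) + j) := by
  ext i j
  simp only [of_apply, row, one_mul, ← pow_add, mom_X]

lemma row_lin (c : ℕ → K) (N : ℕ) (a : K) :
    (of fun i : Fin N => row c N ((X + C a) * X ^ (i : ℕ))) =
    of fun i j : Fin N => a * c ((i : ℕ) + j) + c ((i : ℕ) + j + 1) := by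
  ext i j
  simp only [of_apply, row]
  rw [show (X + C a) * X ^ (i : ℕ) * X ^ (j : ℕ) =
    C a * X ^ ((i : ℕ) + j) + X ^ ((i : ℕ) + j + 1) by ring, map_add, mom_monomial, mom_X]

lemma row_quad (c : ℕ → K) (N : ℕ) (a b : K) :
    (of fun i : Fin N => row c N ((X + C a) * (X + C b) * X ^ (i : ℕ))) =
    of fun i j : Fin N => a * b * c ((i : ℕ) + j) + (a + b) * c ((i : ℕ) + j + 1)
      + c ((i : ℕ) + j + 2) := by
  ext i j
  simp only [of_apply, row]
  rw [show (X + C a) * (X + C b) * X ^ (i : ℕ) * X ^ (j : ℕ) =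
    C (a * b) * X ^ ((i : ℕ) + j) + C (a + b) * X ^ ((i : ℕ) + j + 1)
      + X ^ ((i : ℕ) + j + 2) by simp only [C_mul, C_add]; ring, map_add, map_add, mom_monomial,
      mom_monomial, mom_X]

/-- The common rows. -/
noncomputable def Nn (c : ℕ → K) (a b : K) (m : ℕ) : Fin m → Fin (m + 2) → K :=
  fun j => row c (m + 2) ((X + C a) * (X + C b) * X ^ (j : ℕ))

lemma Nn_comm (c : ℕ → K) (a b : K) (m : ℕ) : Nn c a b m = Nn c b a m := by
  unfold Nn
  simp only [mul_comm (X + C a)]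

lemma br_uw (c : ℕ → K) (a b : K) (m : ℕ) :
    br (Nn c a b m) (row c (m + 2) (X + C a))
      (row c (m + 2) ((X + C a) * (X + C b) * X ^ m)) =
    det (of fun i j : Fin (m + 2) => a * c ((i : ℕ) + j) + c ((i : ℕ) + j + 1)) := by
  rw [← row_lin, ← det_monic c (m + 2) (X + C a) (P b) (P_monic b) (P_deg b)]
  unfold br
  congr 2
  ext i k
  refine Fin.cases ?_ (fun i => ?_) i
  · simp [P]
  · refine Fin.lastCases ?_ (fun i => ?_) i
    · simp [P, mul_assoc]
    · simp [P, Nn, mul_assoc]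

lemma br_e {m : ℕ} (N : Fin m → Fin (m + 2) → K) (x : Fin (m + 2) → K) :
    br N x (Pi.single (Fin.last (m + 1)) 1) = det (of fun i k : Fin (m + 1) =>
      (Fin.cons x N : Fin (m + 1) → Fin (m + 2) → K) i k.castSucc) := by
  rw [← det_snoc_single]
  unfold br
  rw [Fin.cons_snoc_eq_snoc_cons]

lemma br_ue (c : ℕ → K) (a b : K) (m : ℕ) :
    br (Nn c a b m) (row c (m + 2) (X + C a)) (Pi.single (Fin.last (m + 1)) 1) =
    det (of fun i j : Fin (m + 1) => a * c ((i : ℕ) + j) + c ((i : ℕ) + j + 1)) := by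
  rw [← row_lin, ← det_monic c (m + 1) (X + C a) (P b) (P_monic b) (P_deg b), br_e]
  congr 2
  ext i k
  refine Fin.cases ?_ (fun i => ?_) i
  · simp [P, row]
  · simp [P, Nn, row, mul_assoc]

lemma br_we (c : ℕ → K) (a b : K) (m : ℕ) :
    br (Nn c a b m) (row c (m + 2) ((X + C a) * (X + C b) * X ^ m))
      (Pi.single (Fin.last (m + 1)) 1) = (-1) ^ m *
    det (of fun i j : Fin (m + 1) => a * b * c ((i : ℕ) + j) + (a + b) * c ((i : ℕ) + j + 1)
      + c ((i : ℕ) + j + 2)) := by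
  have h := det_snoc_cons (fun (i : Fin m) (k : Fin (m + 1)) => Nn c a b m i k.castSucc)
    (fun k => row c (m + 2) ((X + C a) * (X + C b) * X ^ m) k.castSucc)
  have h1 : (of (Fin.snoc (fun (i : Fin m) (k : Fin (m + 1)) => Nn c a b m i k.castSucc)
    (fun k => row c (m + 2) ((X + C a) * (X + C b) * X ^ m) k.castSucc) :
      Fin (m + 1) → Fin (m + 1) → K)) =
      of fun i : Fin (m + 1) => row c (m + 1) ((X + C a) * (X + C b) * X ^ (i : ℕ)) := by
    ext i k
    refine Fin.lastCases ?_ (fun i => ?_) i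
    · simp [row]
    · simp [Nn, row]
  rw [← row_quad, ← h1, h, ← mul_assoc, ← mul_pow, neg_mul_neg, one_mul, one_pow, one_mul, br_e]
  congr 2
  ext i k
  refine Fin.cases ?_ (fun i => ?_) i
  · simp
  · simp

lemma br_uv (c : ℕ → K) (a b : K) (m : ℕ) :
    br (Nn c a b m) (row c (m + 2) (X + C a)) (row c (m + 2) (X + C b)) = (-1) ^ (m + 1) *
      ((b - a) * det (of fun i j : Fin (m + 2) => c ((i : ℕ) + j))) := by
  unfold br
  rw [Fin.cons_snoc_eq_snoc_cons, det_snoc_cons]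
  congr 1
  rw [← row_one, ← det_monic c (m + 2) 1 (Q a b) (Q_monic a b) (Q_deg a b)]
  set A : Matrix (Fin (m + 2)) (Fin (m + 2)) K :=
    of fun i : Fin (m + 2) => row c (m + 2) (1 * Q a b i) with hA
  have e : (of (Fin.cons (row c (m + 2) (X + C b)) (Fin.cons (row c (m + 2) (X + C a))
      (Nn c a b m) : Fin (m + 1) → Fin (m + 2) → K) : Fin (m + 2) → Fin (m + 2) → K)) =
      (A.updateRow 0 ((b - a) • A 0)).updateRow 0
        ((A.updateRow 0 ((b - a) • A 0)) 0 + (A.updateRow 0 ((b - a) • A 0)) 1) := by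
    ext i k
    refine Fin.cases ?_ (fun i => ?_) i
    · rw [updateRow_self, of_apply, Fin.cons_zero, updateRow_self,
        show (A.updateRow 0 ((b - a) • A 0)) 1 = A 1 from updateRow_ne (by simp)]
      simp only [hA, of_apply, Pi.add_apply, Pi.smul_apply, row, ← map_smul, ← map_add]
      congr 1
      simp only [Fin.val_zero, Fin.val_one, Q, P, Polynomial.smul_eq_C_mul, C_sub]
      ring
    · rw [updateRow_ne (Fin.succ_ne_zero _), updateRow_ne (Fin.succ_ne_zero _)]
      refine Fin.cases ?_ (fun i => ?_) i
      · simp [hA, Q, P]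
      · simp [hA, Q, P, Nn, mul_assoc]
  rw [e, det_updateRow_add_self _ (by simp), det_updateRow_smul]
  congr 2
  exact updateRow_eq_self A 0

end HankelAux

open HankelAux in
theorem stmt3 {K : Type*} [Field K] [CharZero K]
    (c : ℕ → K) (α β : K) (n : ℕ) (hn : 0 < n) :
    (β - α) *
        Matrix.det (Matrix.of fun i j : Fin n =>
          α * β * c ((i : ℕ) + j) + (α + β) * c ((i : ℕ) + j + 1) + c ((i : ℕ) + j + 2)) *
        Matrix.det (Matrix.of fun i j : Fin (n + 1) => c ((i : ℕ) + j)) =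
      Matrix.det (Matrix.of fun i j : Fin n => α * c ((i : ℕ) + j) + c ((i : ℕ) + j + 1)) *
          Matrix.det (Matrix.of fun i j : Fin (n + 1) =>
            β * c ((i : ℕ) + j) + c ((i : ℕ) + j + 1)) -
        Matrix.det (Matrix.of fun i j : Fin n => β * c ((i : ℕ) + j) + c ((i : ℕ) + j + 1)) *
          Matrix.det (Matrix.of fun i j : Fin (n + 1) =>
            α * c ((i : ℕ) + j) + c ((i : ℕ) + j + 1)) := by
  obtain ⟨m, rfl⟩ : ∃ m, n = m + 1 := ⟨n - 1, by omega⟩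
  have h := plucker (Nn c α β m)
    (row c (m + 2) ((Polynomial.X + Polynomial.C α) * (Polynomial.X + Polynomial.C β)
      * Polynomial.X ^ m)) (Pi.single (Fin.last (m + 1)) 1)
    (row c (m + 2) (Polynomial.X + Polynomial.C α))
    (row c (m + 2) (Polynomial.X + Polynomial.C β))
  have hvw := br_uw c β α m
  have hve := br_ue c β α m
  rw [Nn_comm c β α] at hvw hve
  rw [mul_comm (Polynomial.X + Polynomial.C β)] at hvw
  rw [br_we, br_uv, br_ue, br_swap _ (Pi.single _ _), hve,
    br_swap _ (row c (m + 2) (_ * _)) (row c (m + 2) (Polynomial.X + Polynomial.C α)), br_uw,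
    br_swap _ (row c (m + 2) (_ * _)) (row c (m + 2) (Polynomial.X + Polynomial.C β)), hvw] at h
  have hs : ((-1 : K) ^ m) * (-1) ^ m = 1 := by rw [← mul_pow]; simp
  rw [pow_succ] at h
  linear_combination (-1 : K) * h - (β - α) *
        Matrix.det (Matrix.of fun i j : Fin (m + 1) =>
          α * β * c ((i : ℕ) + j) + (α + β) * c ((i : ℕ) + j + 1) + c ((i : ℕ) + j + 2)) *
        Matrix.det (Matrix.of fun i j : Fin (m + 1 + 1) => c ((i : ℕ) + j)) * hs
end

section
/- Let M be a linear functional on the polynomial ring K[x] over a field K of characteristic zero, with moments ν_n := M(x^n), and assume that all Hankel determinants det_{0≤i,j≤n}(ν_{i+j}), n = 0, 1, 2, …, are nonzero. For each n ≥ 0 define the polynomial q_n(x) := det_{0≤i,j≤n−1}( ν_{i+j+1} − ν_{i+j}·x ). Then q_n has degree exactly n, and M( x^k · q_n(x) ) = 0 for all 0 ≤ k ≤ n−1. -/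
open Polynomial Matrix

theorem hankel_aux {K : Type*} [Field K] (ν : ℕ → K) (n : ℕ) :
    Matrix.det (Matrix.of fun i j : Fin n =>
        C (ν ((i : ℕ) + j + 1)) - C (ν ((i : ℕ) + j)) * X) =
    ∑ j : Fin (n + 1), X ^ (j : ℕ) * C ((-1) ^ (j : ℕ) *
      Matrix.det (Matrix.of fun (i l : Fin n) => ν ((i : ℕ) + (j.succAbove l : ℕ)))) := by
  let B : Matrix (Fin (n + 1)) (Fin (n + 1)) K[X] :=
    Matrix.of fun i j => Fin.cases (X ^ (j : ℕ)) (fun i' : Fin n => C (ν ((i' : ℕ) + j))) i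
  let A : Matrix (Fin (n + 1)) (Fin (n + 1)) K[X] :=
    Matrix.of fun i j => Fin.cases (B i 0) (fun j' : Fin n => B i j'.succ - X * B i j'.castSucc) j
  have hAB : B.det = A.det := by
    apply Matrix.det_eq_of_forall_col_eq_smul_add_pred (fun _ => X)
    · intro i; simp [A]
    · intro i j; simp [A]
  have hA : A.det = Matrix.det (Matrix.of fun i j : Fin n =>
        C (ν ((i : ℕ) + j + 1)) - C (ν ((i : ℕ) + j)) * X) := by
    rw [Matrix.det_succ_row_zero, Fin.sum_univ_succ, Finset.sum_eq_zero]
    · have h0 : A 0 0 = 1 := by simp [A, B]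
      rw [h0]
      simp only [Fin.val_zero, pow_zero, one_mul, add_zero]
      congr 1
      ext1 i j
      simp [A, B, ← add_assoc]
    · intro j _
      have h0 : A 0 j.succ = 0 := by simp [A, B, pow_succ']
      rw [h0]; simp
  rw [← hA, ← hAB, Matrix.det_succ_row_zero]
  refine Finset.sum_congr rfl fun j _ => ?_
  have h0 : B 0 j = X ^ (j : ℕ) := by simp [B]
  have h1 : (B.submatrix Fin.succ j.succAbove).det =
      C (Matrix.det (Matrix.of fun (i l : Fin n) => ν ((i : ℕ) + (j.succAbove l : ℕ)))) := by
    rw [RingHom.map_det]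
    congr 1
  rw [h0, h1]
  simp only [map_mul, map_pow, map_neg, map_one]
  ring

theorem stmt6 {K : Type*} [Field K] [CharZero K]
    (M : Polynomial K →ₗ[K] K) (ν : ℕ → K) (hν : ∀ k, ν k = M (X ^ k))
    (hH : ∀ n : ℕ, Matrix.det (Matrix.of fun i j : Fin (n + 1) => ν ((i : ℕ) + j)) ≠ 0)
    (n : ℕ) :
    (Matrix.det (Matrix.of fun i j : Fin n =>
        C (ν ((i : ℕ) + j + 1)) - C (ν ((i : ℕ) + j)) * X)).degree = (n : WithBot ℕ) ∧
      ∀ k < n, M (X ^ k * Matrix.det (Matrix.of fun i j : Fin n =>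
        C (ν ((i : ℕ) + j + 1)) - C (ν ((i : ℕ) + j)) * X)) = 0 := by
  constructor
  · have hE : (Matrix.of fun i j : Fin n =>
        C (ν ((i : ℕ) + j + 1)) - C (ν ((i : ℕ) + j)) * X) =
        (X : K[X]) • (-(Matrix.of fun i j : Fin n => ν ((i : ℕ) + j))).map C +
          (Matrix.of fun i j : Fin n => ν ((i : ℕ) + j + 1)).map C := by
      ext1 i j
      simp
      ring
    rw [hE]
    have hc := Polynomial.coeff_det_X_add_C_card (-(Matrix.of fun i j : Fin n => ν ((i : ℕ) + j)))
      (Matrix.of fun i j : Fin n => ν ((i : ℕ) + j + 1))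
    have hd := Polynomial.natDegree_det_X_add_C_le (-(Matrix.of fun i j : Fin n => ν ((i : ℕ) + j)))
      (Matrix.of fun i j : Fin n => ν ((i : ℕ) + j + 1))
    rw [Fintype.card_fin] at hc hd
    apply le_antisymm (Polynomial.natDegree_le_iff_degree_le.mp hd)
    apply Polynomial.le_degree_of_ne_zero
    rw [hc, Matrix.det_neg]
    apply mul_ne_zero (by simp)
    cases n with
    | zero => simp
    | succ m => exact hH m
  · intro k hk
    rw [hankel_aux, Finset.mul_sum, map_sum]
    let D : Matrix (Fin (n + 1)) (Fin (n + 1)) K :=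
      Matrix.of fun i j => Fin.cases (ν (k + (j : ℕ))) (fun i' : Fin n => ν ((i' : ℕ) + j)) i
    have hD : D.det = 0 := by
      apply Matrix.det_zero_of_row_eq (i := 0) (j := Fin.succ ⟨k, hk⟩) (Fin.succ_ne_zero _).symm
      ext j
      simp [D]
    rw [← hD, Matrix.det_succ_row_zero]
    refine Finset.sum_congr rfl fun j _ => ?_
    rw [← mul_assoc, ← pow_add, mul_comm, ← Polynomial.smul_eq_C_mul, map_smul, ← hν, smul_eq_mul]
    have h0 : D 0 j = ν (k + j) := by simp [D]
    have h1 : D.submatrix Fin.succ j.succAbove =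
      Matrix.of fun (i l : Fin n) => ν ((i : ℕ) + (j.succAbove l : ℕ)) := by
      ext i l; simp [D]
    rw [h0, h1]
    ring
end

section
/- Fix d ≥ 1 and x_1,…,x_{d−1} ∈ K, and for each n ≥ 0 define the polynomial q_n(y) := det_{0≤i,j≤n−1}( L( x^{i+j} · (x − y) · ∏_{ℓ=1}^{d−1}(x − x_ℓ) ) ), where each matrix entry is a degree-1 polynomial in y obtained by applying L coefficient-wise. Then for all 0 ≤ s ≤ n−1 one has L( x^s · q_n(x) · ∏_{ℓ=1}^{d−1}(x − x_ℓ) ) = 0; that is, the polynomials q_n are orthogonal to 1, x, …, x^{n−1} with respect to the linear functional p(x) ↦ L( p(x) · ∏_{ℓ=1}^{d−1}(x − x_ℓ) ). -/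
open Polynomial Matrix

/-- Bordered Hankel determinant. -/
theorem aux_det {R : Type*} [CommRing R] (m : ℕ → R) (n : ℕ) :
    Matrix.det (Matrix.of fun i j : Fin n =>
      C (m ((i : ℕ) + j + 1)) - C (m ((i : ℕ) + j)) * (X : Polynomial R)) =
    ∑ j : Fin (n + 1), (-1) ^ (j : ℕ) * X ^ (j : ℕ) *
      C (Matrix.det (Matrix.of fun (i : Fin n) (k : Fin n) =>
        m ((i : ℕ) + (j.succAbove k : Fin (n + 1))))) := by
  let B : Matrix (Fin (n + 1)) (Fin (n + 1)) (Polynomial R) := Matrix.of fun i j =>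
    Fin.cases (motive := fun _ => Polynomial R) (X ^ (j : ℕ)) (fun i' => C (m ((i' : ℕ) + j))) i
  let A : Matrix (Fin (n + 1)) (Fin (n + 1)) (Polynomial R) := Matrix.of fun i j =>
    Fin.cases (motive := fun _ => Polynomial R) (B i 0)
      (fun j' => B i j'.succ - X * B i j'.castSucc) j
  have h1 : B.det = A.det := by
    apply Matrix.det_eq_of_forall_col_eq_smul_add_pred (fun _ => X)
    · intro i; simp [A]
    · intro i j; simp [A]
  have h2 : A.det = Matrix.det (Matrix.of fun i j : Fin n =>
      C (m ((i : ℕ) + j + 1)) - C (m ((i : ℕ) + j)) * (X : Polynomial R)) := by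
    rw [Matrix.det_succ_row_zero, Fin.sum_univ_succ, Finset.sum_eq_zero]
    · have h00 : A 0 0 = 1 := pow_zero X
      rw [h00, Fin.val_zero, pow_zero, one_mul, one_mul, add_zero]
      refine congrArg Matrix.det ?_
      ext1 i j
      change C (m ((i : ℕ) + ((j : ℕ) + 1))) - X * C (m ((i : ℕ) + (j : ℕ))) =
        C (m ((i : ℕ) + j + 1)) - C (m ((i : ℕ) + j)) * (X : Polynomial R)
      rw [← add_assoc, mul_comm X]
    · intro j _
      have h0j : A 0 j.succ = 0 := by
        change (X : Polynomial R) ^ ((j : ℕ) + 1) - X * X ^ (j : ℕ) = 0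
        rw [pow_succ', sub_self]
      rw [h0j, mul_zero, zero_mul]
  rw [← h2, ← h1, Matrix.det_succ_row_zero]
  refine Finset.sum_congr rfl fun j _ => ?_
  rw [RingHom.map_det]
  rfl

theorem aux_orth {R : Type*} [CommRing R] (M : Polynomial R →ₗ[R] R) (n s : ℕ) (hs : s < n) :
    M (X ^ s * Matrix.det (Matrix.of fun i j : Fin n =>
      C (M (X ^ ((i : ℕ) + j + 1))) - C (M (X ^ ((i : ℕ) + j))) * (X : Polynomial R))) = 0 := by
  rw [aux_det (fun k => M (X ^ k)) n, Finset.mul_sum, map_sum]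
  let B : Matrix (Fin (n + 1)) (Fin (n + 1)) R := Matrix.of fun i j =>
    Fin.cases (motive := fun _ => R) (M (X ^ (s + (j : ℕ)))) (fun i' => M (X ^ ((i' : ℕ) + j))) i
  have h0 : B.det = 0 :=
    Matrix.det_zero_of_row_eq (i := 0) (j := Fin.succ ⟨s, hs⟩) (Fin.succ_ne_zero _).symm
      (by ext j; simp [B])
  rw [← h0, Matrix.det_succ_row_zero]
  refine Finset.sum_congr rfl fun j _ => ?_
  have : ∀ c : R, (X ^ s * ((-1) ^ (j : ℕ) * X ^ (j : ℕ) * C c) : Polynomial R) =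
      ((-1) ^ (j : ℕ) * c) • X ^ (s + (j : ℕ)) := by
    intro c
    rw [Polynomial.smul_eq_C_mul]
    simp only [map_mul, map_pow, map_neg, map_one]
    ring
  rw [this, map_smul, smul_eq_mul, mul_right_comm]
  rfl

theorem stmt7 {K : Type*} [Field K] [CharZero K]
    (L : Polynomial K →ₗ[K] K) (p : ℕ → Polynomial K)
    (hmonic : ∀ k, (p k).Monic) (hdeg : ∀ k, (p k).natDegree = k)
    (ω : ℕ → K) (hω : ∀ k, ω k ≠ 0)
    (horth : ∀ m k, L (p m * p k) = if m = k then ω k else 0)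
    (μ : ℕ → K) (hμ : ∀ k, μ k = L (X ^ k))
    (d : ℕ) (hd : 1 ≤ d) (x : Fin (d - 1) → K) (n : ℕ)
    (q : Polynomial K)
    -- q is the n×n determinant whose (i,j)-entry is the degree-1 polynomial (in the
    -- variable `X` of `q`) obtained by applying L coefficient-wise to
    -- x^(i+j) · (x − y) · ∏ (x − x_ℓ), i.e. C (L (x^(i+j+1)·∏)) − C (L (x^(i+j)·∏)) · X
    (hq : q = Matrix.det (Matrix.of fun i j : Fin n =>
        C (L (X ^ ((i : ℕ) + (j : ℕ)) * X * ∏ ℓ, (X - C (x ℓ)))) -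
          C (L (X ^ ((i : ℕ) + (j : ℕ)) * ∏ ℓ, (X - C (x ℓ)))) * X)) :
    ∀ s < n, L (X ^ s * q * ∏ ℓ, (X - C (x ℓ))) = 0 := by
  intro s hs
  have h := aux_orth (L ∘ₗ LinearMap.mulRight K (∏ ℓ, (X - C (x ℓ)))) n s hs
  simp only [LinearMap.comp_apply, LinearMap.mulRight_apply, pow_succ] at h
  rw [hq]
  exact h
end

section
/- For all non-negative integers n and d, det_{0≤i,j≤n−1}( μ_{i+j+d} ) = (−1)^{n·d} · det_{1≤i,j≤d}( p^{(j−1)}_{n+i−1}(0) / (j−1)! ) · det_{0≤i,j≤n−1}( μ_{i+j} ), where p^{(j)} denotes the j-th derivative of p. -/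
open Polynomial Matrix

theorem aux_rot (N m : ℕ) (i : Fin N) : (((finRotate N) ^ m) i : ℕ) = ((i : ℕ) + m) % N := by
  obtain _ | N := N
  · exact i.elim0
  induction m with
  | zero => simp [Nat.mod_eq_of_lt i.2]
  | succ m ih =>
    rw [pow_succ', Equiv.Perm.mul_apply, finRotate_succ_apply, Fin.val_add, ih, Fin.val_one',
      ← Nat.add_mod, add_assoc]

theorem aux_orth_s15 {K : Type*} [Field K]
    (L : Polynomial K →ₗ[K] K) (p : ℕ → Polynomial K)
    (hmonic : ∀ k, (p k).Monic) (hdeg : ∀ k, (p k).natDegree = k)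
    (ω : ℕ → K)
    (horth : ∀ m k, L (p m * p k) = if m = k then ω k else 0) (i m : ℕ) (hm : m ≤ i) :
    ∀ q : Polynomial K, (∀ k, m ≤ k → q.coeff k = 0) → L (p i * q) = 0 := by
  induction m with
  | zero =>
    intro q hq
    have : q = 0 := by ext k; simp [hq k]
    simp [this]
  | succ m ih =>
    intro q hq
    have h := ih (by omega) (q - C (q.coeff m) * p m) (by
      intro k hk
      rw [coeff_sub, coeff_C_mul]
      rcases hk.eq_or_lt with rfl | hk
      · have : (p m).coeff m = 1 := by
          have := (hmonic m).coeff_natDegree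
          rwa [hdeg] at this
        simp [this]
      · rw [hq k hk, coeff_eq_zero_of_natDegree_lt (p := p m) (by rw [hdeg]; exact hk)]
        simp)
    have e : p i * (q - C (q.coeff m) * p m) = p i * q - (q.coeff m) • (p i * p m) := by
      rw [smul_eq_C_mul]; ring
    rw [e, map_sub, map_smul, horth, if_neg (by omega)] at h
    simpa using h

theorem aux_detC {K : Type*} [Field K] (p : ℕ → Polynomial K)
    (hmonic : ∀ k, (p k).Monic) (hdeg : ∀ k, (p k).natDegree = k) (N : ℕ) :
    (Matrix.of fun i k : Fin N => (p i).coeff (k : ℕ)).det = 1 := by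
  rw [Matrix.det_of_lowerTriangular]
  · apply Finset.prod_eq_one
    intro i _
    have := (hmonic i).coeff_natDegree
    rwa [hdeg] at this
  · intro i j hij
    have hij : (i : ℕ) < j := hij
    exact coeff_eq_zero_of_natDegree_lt (by rw [hdeg]; exact hij)

theorem aux_L {K : Type*} [Field K]
    (L : Polynomial K →ₗ[K] K) (p : ℕ → Polynomial K)
    (hdeg : ∀ k, (p k).natDegree = k)
    (μ : ℕ → K) (hμ : ∀ k, μ k = L (X ^ k)) (N : ℕ) (i : Fin N) (c : ℕ) :
    ∑ k : Fin N, (p i).coeff (k : ℕ) * μ (k + c) = L (p i * X ^ c) := by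
  rw [Fin.sum_univ_eq_sum_range (fun k => (p i).coeff k * μ (k + c)) N]
  conv_rhs => rw [(p i).as_sum_range' N (by rw [hdeg]; exact i.2)]
  rw [Finset.sum_mul, map_sum]
  refine Finset.sum_congr rfl fun k _ => ?_
  rw [← C_mul_X_pow_eq_monomial, mul_assoc, ← pow_add, ← smul_eq_C_mul, map_smul, hμ, smul_eq_mul]

theorem stmt15 {K : Type*} [Field K] [CharZero K]
    (L : Polynomial K →ₗ[K] K) (p : ℕ → Polynomial K)
    (hmonic : ∀ k, (p k).Monic) (hdeg : ∀ k, (p k).natDegree = k)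
    (ω : ℕ → K) (hω : ∀ k, ω k ≠ 0)
    (horth : ∀ m k, L (p m * p k) = if m = k then ω k else 0)
    (μ : ℕ → K) (hμ : ∀ k, μ k = L (X ^ k))
    (n d : ℕ) :
    Matrix.det (Matrix.of fun i j : Fin n => μ ((i : ℕ) + j + d)) =
      (-1 : K) ^ (n * d) *
        Matrix.det (Matrix.of fun i j : Fin d =>
          (Polynomial.derivative^[(j : ℕ)] (p (n + (i : ℕ)))).eval 0 /
            ((j : ℕ).factorial : K)) *
        Matrix.det (Matrix.of fun i j : Fin n => μ ((i : ℕ) + j)) := by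
  have hD : (Matrix.of fun i j : Fin d =>
          (Polynomial.derivative^[(j : ℕ)] (p (n + (i : ℕ)))).eval 0 /
            ((j : ℕ).factorial : K)) =
      Matrix.of fun i j : Fin d => (p (n + (i : ℕ))).coeff (j : ℕ) := by
    ext i j
    have h0 : ((j : ℕ).factorial : K) ≠ 0 := by exact_mod_cast (Nat.factorial_ne_zero _)
    rw [Matrix.of_apply, Matrix.of_apply, ← coeff_zero_eq_eval_zero, coeff_iterate_derivative,
      zero_add, Nat.descFactorial_self, nsmul_eq_mul, mul_div_cancel_left₀ _ h0]
  rw [hD]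
  set G : Matrix (Fin (n + d)) (Fin (n + d)) K := Matrix.of fun k c =>
    if (c : ℕ) < n then μ ((k : ℕ) + c) else if (k : ℕ) = c - n then 1 else 0 with hG
  set Cm : Matrix (Fin (n + d)) (Fin (n + d)) K := Matrix.of fun i k => (p i).coeff (k : ℕ) with hC
  have hA : Matrix.det (Matrix.of fun i j : Fin n => μ ((i : ℕ) + j)) =
      Matrix.det (Matrix.of fun i j : Fin n => L (p i * X ^ (j : ℕ))) := by
    have : (Matrix.of fun i j : Fin n => L (p i * X ^ (j : ℕ))) =
        (Matrix.of fun i k : Fin n => (p i).coeff (k : ℕ)) *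
          (Matrix.of fun i j : Fin n => μ ((i : ℕ) + j)) := by
      ext i j
      rw [Matrix.mul_apply]
      simp only [Matrix.of_apply]
      rw [aux_L L p hdeg μ hμ]
    rw [this, Matrix.det_mul, aux_detC p hmonic hdeg, one_mul]
  have hCG : (Cm * G).submatrix finSumFinEquiv finSumFinEquiv =
      Matrix.fromBlocks (Matrix.of fun i j : Fin n => L (p i * X ^ (j : ℕ)))
        (Matrix.of fun (i : Fin n) (j : Fin d) => (p i).coeff (j : ℕ)) 0
        (Matrix.of fun i j : Fin d => (p (n + (i : ℕ))).coeff (j : ℕ)) := by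
    have h1 : ∀ (i : Fin (n + d)) (j : Fin n),
        (Cm * G) i (Fin.castAdd d j) = L (p i * X ^ (j : ℕ)) := by
      intro i j
      rw [Matrix.mul_apply, ← aux_L L p hdeg μ hμ (n + d) i j]
      simp [hC, hG]
    have h2 : ∀ (i : Fin (n + d)) (j : Fin d),
        (Cm * G) i (Fin.natAdd n j) = (p i).coeff (j : ℕ) := by
      intro i j
      rw [Matrix.mul_apply, Finset.sum_eq_single (⟨j, by omega⟩ : Fin (n + d))]
      · simp [hC, hG]
      · intro b _ hb
        have : (b : ℕ) ≠ j := fun h => hb (Fin.ext h)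
        simp [hG, this]
      · simp
    ext i j
    rcases i with i | i <;> rcases j with j | j
    · simp [h1]
    · simp [h2]
    · simp only [Matrix.submatrix_apply, finSumFinEquiv_apply_left, finSumFinEquiv_apply_right, h1,
        Matrix.fromBlocks_apply₂₁, Matrix.zero_apply]
      apply aux_orth_s15 L p hmonic hdeg ω horth _ _ le_rfl
      intro k hk
      rw [coeff_X_pow, if_neg]
      simp at hk
      omega
    · simp [h2]
  have hdet1 : G.det = Matrix.det (Matrix.of fun i j : Fin n => L (p i * X ^ (j : ℕ))) *
      Matrix.det (Matrix.of fun i j : Fin d => (p (n + (i : ℕ))).coeff (j : ℕ)) := by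
    rw [← Matrix.det_fromBlocks_zero₂₁, ← hCG, Matrix.det_submatrix_equiv_self, Matrix.det_mul,
      hC, aux_detC p hmonic hdeg, one_mul]
  have hG' : (G.submatrix ((finRotate (n + d)) ^ d) id).submatrix finSumFinEquiv finSumFinEquiv =
      Matrix.fromBlocks (Matrix.of fun i j : Fin n => μ ((i : ℕ) + j + d)) 0
        (Matrix.of fun (i : Fin d) (j : Fin n) => μ ((i : ℕ) + j)) 1 := by
    ext i j
    rcases i with i | i
    · have hi : ((((finRotate (n + d)) ^ d) (Fin.castAdd d i) : Fin (n + d)) : ℕ) = i + d := by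
        rw [aux_rot, Fin.val_castAdd, Nat.mod_eq_of_lt (by omega)]
      rcases j with j | j
      · simp [hG, hi, add_right_comm]
      · simp [hG, hi]
        omega
    · have hi : ((((finRotate (n + d)) ^ d) (Fin.natAdd n i) : Fin (n + d)) : ℕ) = i := by
        rw [aux_rot, Fin.val_natAdd, show n + (i : ℕ) + d = i + (n + d) by omega,
          Nat.add_mod_right, Nat.mod_eq_of_lt (by omega)]
      rcases j with j | j
      · simp [hG, hi]
      · simp [hG, hi, Matrix.one_apply, Fin.ext_iff]
  have hdet2 : Matrix.det (Matrix.of fun i j : Fin n => μ ((i : ℕ) + j + d)) =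
      (-1 : K) ^ (n * d) * G.det := by
    have h := congrArg Matrix.det hG'
    rw [Matrix.det_fromBlocks_zero₁₂, Matrix.det_one, mul_one, Matrix.det_submatrix_equiv_self,
      Matrix.det_permute, map_pow, sign_finRotate] at h
    rw [← h]
    congr 1
    push_cast
    rw [← pow_mul]
    obtain _ | d := d
    · simp
    · have e : (n + (d + 1) - 1) * (d + 1) = n * (d + 1) + d * (d + 1) := by
        rw [← add_assoc, Nat.add_sub_cancel]; ring
      rw [e, pow_add, (Nat.even_mul_succ_self d).neg_one_pow, mul_one]
  rw [hdet2, hdet1, hA]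
  ring
end
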